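/- Let S be a finite set with |S| = k ≥ 1, let θ > 0 and ε > 0, let θ' : S → ℝ satisfy θ'_i ≥ θ for all i ∈ S, and let a ∈ S with θ'_a = θ. Write θ_S = Σ_{i∈S} θ'_i. Define probability mass functions p and q on S by p_i = θ'_i/θ_S for all i ∈ S, q_i = θ'_i/(θ_S + 2ε) for i ≠ a, and q_a = (θ + 2ε)/(θ_S + 2ε). Then Σ_{i∈S} p_i · ln(p_i/q_i) ≤ 4ε²/(k·θ·(θ + 2ε)). -/

import Mathlib

open Finset

/-!
The Kullback–Leibler divergence is at most the `χ²` divergence, because `log x ≤ x - 1`. When one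
MNL weight `w a` changes by `δ`, the `χ²` divergence can be computed exactly: with total weight `W`
it is `δ² (W - w a) / (W² (w a + δ))`. This is at most `δ² / (W (w a + δ))`, and `W` is at least the
number of items times any lower bound for the weights.
-/

section Divergences

variable {ι : Type*} {S : Finset ι} {p q : ι → ℝ}

/-- The Kullback–Leibler divergence on a finite set, as the real sum of `p * log (p / q)`; it is
meant for `q` positive on `S`, since a point where `q` vanishes contributes `0` instead of `∞`. -/
noncomputable def klSum (S : Finset ι) (p q : ι → ℝ) : ℝ :=
  ∑ i ∈ S, p i * Real.log (p i / q i)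

/-- The `χ²` divergence of `p` from `q` on a finite set, the upper bound used for `klSum`; it is
meant for `q` positive on `S`, since a point where `q` vanishes contributes `0`. -/
noncomputable def chiSqSum (S : Finset ι) (p q : ι → ℝ) : ℝ :=
  ∑ i ∈ S, (p i - q i) ^ 2 / q i

lemma mul_log_div_le_sq_sub_div_add_sub {x y : ℝ} (hx : 0 ≤ x) (hy : 0 < y) :
    x * Real.log (x / y) ≤ (x - y) ^ 2 / y + (x - y) := by
  rcases hx.eq_or_lt with rfl | hx
  · simp [sq, hy.ne']
  calc x * Real.log (x / y)
      ≤ x * (x / y - 1) := by gcongr; exact Real.log_le_sub_one_of_pos (by positivity)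
    _ = (x - y) ^ 2 / y + (x - y) := by field_simp; ring

lemma klSum_le_chiSqSum (hp : ∀ i ∈ S, 0 ≤ p i) (hq : ∀ i ∈ S, 0 < q i)
    (hpq : ∑ i ∈ S, p i ≤ ∑ i ∈ S, q i) : klSum S p q ≤ chiSqSum S p q := by
  calc klSum S p q
      ≤ ∑ i ∈ S, ((p i - q i) ^ 2 / q i + (p i - q i)) :=
        sum_le_sum fun i hi ↦ mul_log_div_le_sq_sub_div_add_sub (hp i hi) (hq i hi)
    _ = chiSqSum S p q + (∑ i ∈ S, p i - ∑ i ∈ S, q i) := by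
        rw [sum_add_distrib, sum_sub_distrib, chiSqSum]
    _ ≤ chiSqSum S p q := by linarith

end Divergences

lemma sum_update_add {ι M : Type*} [DecidableEq ι] [AddCommMonoid M] {S : Finset ι} {f : ι → M}
    {a : ι} {δ : M} (ha : a ∈ S) :
    ∑ j ∈ S, Function.update f a (f a + δ) j = ∑ j ∈ S, f j + δ := by
  rw [sum_update_of_mem ha, sdiff_singleton_eq_erase, add_right_comm, add_sum_erase S f ha]

section MultinomialLogit

variable {ι : Type*} {S : Finset ι} {w : ι → ℝ}

/-- The probability that item `i` wins in the multinomial logit model with weights `w` when the set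
`S` is offered. The formula is not set to `0` outside `S`, so it is only meaningful for `i ∈ S`. -/
noncomputable def mnlProb (w : ι → ℝ) (S : Finset ι) (i : ι) : ℝ :=
  w i / ∑ j ∈ S, w j

lemma sum_mnlProb (hW : ∑ j ∈ S, w j ≠ 0) : ∑ i ∈ S, mnlProb w S i = 1 := by
  simp only [mnlProb, ← sum_div, div_self hW]

lemma mnlProb_pos (hw : ∀ i ∈ S, 0 < w i) {i : ι} (hi : i ∈ S) : 0 < mnlProb w S i :=
  div_pos (hw i hi) (sum_pos hw ⟨i, hi⟩)

variable [DecidableEq ι] {a : ι} {δ : ℝ}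

lemma mnlProb_update_add (ha : a ∈ S) (i : ι) :
    mnlProb (Function.update w a (w a + δ)) S i =
      if i = a then (w a + δ) / (∑ j ∈ S, w j + δ) else w i / (∑ j ∈ S, w j + δ) := by
  rw [mnlProb, sum_update_add ha, Function.update_apply, ite_div]

lemma chiSqSum_mnlProb_update_add (ha : a ∈ S) (hW : ∑ j ∈ S, w j ≠ 0) (haδ : w a + δ ≠ 0)
    (hWδ : ∑ j ∈ S, w j + δ ≠ 0) :
    chiSqSum S (mnlProb w S) (mnlProb (Function.update w a (w a + δ)) S) =
      δ ^ 2 * (∑ j ∈ S, w j - w a) / ((∑ j ∈ S, w j) ^ 2 * (w a + δ)) := by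
  have rest_sum : ∑ i ∈ S.erase a, w i = ∑ j ∈ S, w j - w a := sum_erase_eq_sub ha
  simp only [chiSqSum, mnlProb_update_add ha]
  simp only [mnlProb]
  set W := ∑ j ∈ S, w j
  have other_term : ∀ i ∈ S.erase a,
      (w i / W - if i = a then (w a + δ) / (W + δ) else w i / (W + δ)) ^ 2 /
        (if i = a then (w a + δ) / (W + δ) else w i / (W + δ)) =
      w i * (δ ^ 2 / (W ^ 2 * (W + δ))) := by
    intro i hi
    rw [if_neg (ne_of_mem_erase hi)]
    rcases eq_or_ne (w i) 0 with hwi | hwi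
    · simp [hwi]
    · field_simp
      ring
  rw [← add_sum_erase S _ ha, sum_congr rfl other_term, ← sum_mul, rest_sum, if_pos rfl]
  field_simp
  ring

lemma klSum_mnlProb_update_add_le (hw : ∀ i ∈ S, 0 < w i) (ha : a ∈ S) (haδ : 0 < w a + δ) :
    klSum S (mnlProb w S) (mnlProb (Function.update w a (w a + δ)) S) ≤
      δ ^ 2 / ((∑ j ∈ S, w j) * (w a + δ)) := by
  have hw' : ∀ i ∈ S, 0 < Function.update w a (w a + δ) i := by
    intro i hi
    rcases eq_or_ne i a with rfl | hia
    · simpa using haδ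
    · simpa [hia] using hw i hi
  have hW : 0 < ∑ j ∈ S, w j := sum_pos hw ⟨a, ha⟩
  have hW' : 0 < ∑ j ∈ S, Function.update w a (w a + δ) j := sum_pos hw' ⟨a, ha⟩
  have same_mass : ∑ i ∈ S, mnlProb w S i =
      ∑ i ∈ S, mnlProb (Function.update w a (w a + δ)) S i := by
    rw [sum_mnlProb hW.ne', sum_mnlProb hW'.ne']
  calc klSum S (mnlProb w S) (mnlProb (Function.update w a (w a + δ)) S)
      ≤ chiSqSum S (mnlProb w S) (mnlProb (Function.update w a (w a + δ)) S) :=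
        klSum_le_chiSqSum (fun _ hi ↦ (mnlProb_pos hw hi).le) (fun _ hi ↦ mnlProb_pos hw' hi)
          same_mass.le
    _ = δ ^ 2 * (∑ j ∈ S, w j - w a) / ((∑ j ∈ S, w j) ^ 2 * (w a + δ)) :=
        chiSqSum_mnlProb_update_add ha hW.ne' haδ.ne' (sum_update_add (f := w) ha ▸ hW'.ne')
    _ ≤ δ ^ 2 * (∑ j ∈ S, w j) / ((∑ j ∈ S, w j) ^ 2 * (w a + δ)) := by
        gcongr
        exact sub_le_self _ (hw a ha).le
    _ = δ ^ 2 / ((∑ j ∈ S, w j) * (w a + δ)) := by field_simp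

theorem stmt_16_general {θ : ℝ} (hθ : 0 < θ) (hw : ∀ i ∈ S, θ ≤ w i) (ha : a ∈ S)
    (haδ : 0 < w a + δ) :
    klSum S (mnlProb w S) (mnlProb (Function.update w a (w a + δ)) S) ≤
      δ ^ 2 / (#S * θ * (w a + δ)) := by
  have card_mul_le : #S * θ ≤ ∑ j ∈ S, w j := by
    simpa only [nsmul_eq_mul] using card_nsmul_le_sum S w θ hw
  have card_S_pos : 0 < #S := card_pos.mpr ⟨a, ha⟩
  calc klSum S (mnlProb w S) (mnlProb (Function.update w a (w a + δ)) S)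
      ≤ δ ^ 2 / ((∑ j ∈ S, w j) * (w a + δ)) :=
        klSum_mnlProb_update_add_le (fun i hi ↦ hθ.trans_le (hw i hi)) ha haδ
    _ ≤ δ ^ 2 / (#S * θ * (w a + δ)) := by gcongr

end MultinomialLogit

theorem stmt_16 {ι : Type*} [DecidableEq ι] (S : Finset ι) (k : ℕ)
    (hk : S.card = k) (hk1 : 1 ≤ k)
    (θ ε : ℝ) (hθ : 0 < θ) (hε : 0 < ε)
    (θ' : ι → ℝ) (hθ' : ∀ i ∈ S, θ ≤ θ' i)
    (a : ι) (ha : a ∈ S) (haθ : θ' a = θ) :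
    ∑ i ∈ S, (θ' i / ∑ j ∈ S, θ' j) *
        Real.log ((θ' i / ∑ j ∈ S, θ' j) /
          (if i = a then (θ + 2 * ε) / ((∑ j ∈ S, θ' j) + 2 * ε)
            else θ' i / ((∑ j ∈ S, θ' j) + 2 * ε))) ≤
      4 * ε ^ 2 / (k * θ * (θ + 2 * ε)) := by
  subst hk haθ
  have kl_le := stmt_16_general (δ := 2 * ε) hθ hθ' ha (by positivity)
  simp only [klSum, mnlProb_update_add ha] at kl_le
  simpa only [mnlProb, mul_pow, show (2 : ℝ) ^ 2 = 4 by norm_num] using kl_le
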